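/- arXiv:1607.06189 — 3 statements merged into one kernel-verified Lean document; each statement's English description precedes it below -/
import Mathlib

section
/- Let R be a Noetherian local ring and let M, N be finitely generated R-modules. Then there is an isomorphism of R-modules stHom_R(M, N) ≅ Tor_1^R(Tr M, N). -/
/-!
Common definitions: Cohen-Macaulay modules, isolated singularities, stable Hom,
syzygies, transposes, Auslander-Reiten sequences, and the Grothendieck-type groups
`G(CM(R))`, `Ex(CM(R))`, `AR(CM(R))` from the paper
"Syzygies of Cohen-Macaulay modules and Grothendieck groups".

Throughout, the maximal ideal of a local ring is realized as the Jacobson radical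
`(⊥ : Ideal R).jacobson` (for a local ring these coincide), which lets the definitions
make sense without a `IsLocalRing` instance argument.
-/

namespace Paper

/-- A regular local ring: a Noetherian local ring whose maximal ideal (= Jacobson radical
of `⊥`) can be generated by `dim A` elements. -/
def IsRegularLocalRing (A : Type) [CommRing A] : Prop :=
  IsNoetherianRing A ∧ IsLocalRing A ∧
    ∃ s : Finset A, Ideal.span (s : Set A) = (⊥ : Ideal A).jacobson ∧
      (s.card : WithBot ℕ∞) = ringKrullDim A

/-- `M` is a (maximal) Cohen-Macaulay `R`-module: it is finitely generated, and it is either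
zero or satisfies `depth M = dim R`, the latter being expressed by the existence of a weakly
`M`-regular sequence of length `dim R` consisting of elements of the maximal ideal
(equivalently, since `depth M ≤ dim R` always holds for nonzero finitely generated `M` over a
Noetherian local ring `R`). -/
def IsMCM (R : Type) [CommRing R] (M : Type) [AddCommGroup M] [Module R M] : Prop :=
  Module.Finite R M ∧ (Subsingleton M ∨
    ∃ rs : List R, (∀ x ∈ rs, x ∈ (⊥ : Ideal R).jacobson) ∧
      RingTheory.Sequence.IsWeaklyRegular M rs ∧
      (rs.length : WithBot ℕ∞) = ringKrullDim R)

/-- The local ring `R` has an isolated singularity: `R_p` is regular local for every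
prime `p` different from the maximal ideal. -/
def IsolatedSingularity (R : Type) [CommRing R] : Prop :=
  ∀ (p : Ideal R) (_ : p.IsPrime), p ≠ (⊥ : Ideal R).jacobson →
    IsRegularLocalRing (Localization p.primeCompl)

section StableHom

variable (R : Type) [CommRing R]

/-- The submodule of `Hom_R(M,N)` consisting of homomorphisms factoring through a
finitely generated free module. -/
def stSub (M N : Type) [AddCommGroup M] [Module R M] [AddCommGroup N] [Module R N] :
    Submodule R (M →ₗ[R] N) :=
  Submodule.span R {f | ∃ (n : ℕ) (g : M →ₗ[R] (Fin n → R)) (h : (Fin n → R) →ₗ[R] N),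
    f = h ∘ₗ g}

/-- The stable Hom module `stHom_R(M,N) = Hom_R(M,N)/{maps factoring through f.g. frees}`. -/
abbrev StHom (M N : Type) [AddCommGroup M] [Module R M] [AddCommGroup N] [Module R N] :=
  (M →ₗ[R] N) ⧸ stSub R M N

/-- The map `stHom_R(M,N) → stHom_R(M,N')` induced by postcomposition with `φ : N →ₗ[R] N'`. -/
def stMapLeft {M N N' : Type} [AddCommGroup M] [Module R M] [AddCommGroup N] [Module R N]
    [AddCommGroup N'] [Module R N'] (φ : N →ₗ[R] N') : StHom R M N →ₗ[R] StHom R M N' :=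
  Submodule.mapQ _ _ (LinearMap.llcomp R M N N' φ) (by
    rw [stSub, Submodule.span_le]
    rintro f ⟨n, g, h, rfl⟩
    exact Submodule.subset_span ⟨n, g, φ ∘ₗ h, rfl⟩)

/-- The map `stHom_R(M,N) → stHom_R(M',N)` induced by precomposition with `φ : M' →ₗ[R] M`. -/
def stMapRight {M M' N : Type} [AddCommGroup M] [Module R M] [AddCommGroup M'] [Module R M']
    [AddCommGroup N] [Module R N] (φ : M' →ₗ[R] M) : StHom R M N →ₗ[R] StHom R M' N :=
  Submodule.mapQ _ _ (LinearMap.lcomp R N φ) (by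
    rw [stSub, Submodule.span_le]
    rintro f ⟨n, g, h, rfl⟩
    exact Submodule.subset_span ⟨n, g ∘ₗ φ, h, rfl⟩)

end StableHom

section Syzygies

variable (R : Type) [CommRing R]

/-- `S` is (isomorphic to) a first syzygy of `M`: the kernel of a minimal free cover
`π : R^n → M` (minimality: `ker π ⊆ m·R^n`). -/
def IsSyzygyOf (S M : Type) [AddCommGroup S] [Module R S] [AddCommGroup M] [Module R M] :
    Prop :=
  ∃ (n : ℕ) (π : (Fin n → R) →ₗ[R] M), Function.Surjective π ∧
    LinearMap.ker π ≤ (⊥ : Ideal R).jacobson • (⊤ : Submodule R (Fin n → R)) ∧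
    Nonempty (S ≃ₗ[R] LinearMap.ker π)

/-- `S` belongs to `ΩCM(R)`: it is a first syzygy of some Cohen-Macaulay module. -/
def MemOmegaCM (S : Type) [AddCommGroup S] [Module R S] : Prop :=
  ∃ N : ModuleCat.{0} R, IsMCM R N ∧ IsSyzygyOf R S N

/-- `M` has a nonzero free direct summand. -/
def HasFreeSummand (M : Type) [AddCommGroup M] [Module R M] : Prop :=
  ∃ P : ModuleCat.{0} R, Nonempty (M ≃ₗ[R] (P × R))

/-- `M'` is the non-free part of `M`: it has no nonzero free direct summand and
`M ≅ M' ⊕ R^a` for some `a ≥ 0`. -/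
def IsNonfreePart (M M' : Type) [AddCommGroup M] [Module R M] [AddCommGroup M'] [Module R M'] :
    Prop :=
  ¬ HasFreeSummand R M' ∧ ∃ a : ℕ, Nonempty (M ≃ₗ[R] (M' × (Fin a → R)))

/-- `M` is an indecomposable module: nonzero, and in any decomposition `M ≅ P × Q`
one factor vanishes. -/
def Indecomp (M : Type) [AddCommGroup M] [Module R M] : Prop :=
  ¬ Subsingleton M ∧ ∀ (P Q : ModuleCat.{0} R), Nonempty (M ≃ₗ[R] (P × Q)) →
    Subsingleton P ∨ Subsingleton Q

/-- `A` is a direct summand of `B`. -/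
def IsSummandOf (A B : Type) [AddCommGroup A] [Module R A] [AddCommGroup B] [Module R B] :
    Prop :=
  ∃ C : ModuleCat.{0} R, Nonempty (B ≃ₗ[R] (A × C))

/-- A linear map is a split epimorphism if it has a right inverse. -/
def IsSplitEpi {M N : Type} [AddCommGroup M] [Module R M] [AddCommGroup N] [Module R N]
    (g : M →ₗ[R] N) : Prop :=
  ∃ s : N →ₗ[R] M, g ∘ₗ s = LinearMap.id

/-- `0 → A → B → C → 0` (given by `f`, `g`) is an Auslander-Reiten sequence: a non-split
short exact sequence of finitely generated modules with `A`, `C` indecomposable non-free,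
such that every non-split-epi map `X → C` from a finitely generated module factors
through `g : B → C`. -/
def IsARSequence {A B C : Type} [AddCommGroup A] [Module R A] [AddCommGroup B] [Module R B]
    [AddCommGroup C] [Module R C] (f : A →ₗ[R] B) (g : B →ₗ[R] C) : Prop :=
  Module.Finite R A ∧ Module.Finite R B ∧ Module.Finite R C ∧
  Function.Injective f ∧ Function.Surjective g ∧ Function.Exact f g ∧
  ¬ IsSplitEpi R g ∧
  Indecomp R A ∧ ¬ Module.Free R A ∧ Indecomp R C ∧ ¬ Module.Free R C ∧
  ∀ (X : ModuleCat.{0} R) (h : (X : Type) →ₗ[R] C), Module.Finite R X → ¬ IsSplitEpi R h →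
    ∃ l : (X : Type) →ₗ[R] B, g ∘ₗ l = h

/-- `R` is of finite CM type: finitely many isomorphism classes of indecomposable
Cohen-Macaulay modules. -/
def FiniteCMType : Prop :=
  ∃ L : List (ModuleCat.{0} R), ∀ U : ModuleCat.{0} R, IsMCM R U → Indecomp R U →
    ∃ V ∈ L, Nonempty ((U : Type) ≃ₗ[R] (V : Type))

/-- `R` is of finite ΩCM type: finitely many isomorphism classes of indecomposable
modules in `ΩCM(R)`. -/
def FiniteOmegaCMType : Prop :=
  ∃ L : List (ModuleCat.{0} R), ∀ U : ModuleCat.{0} R, Module.Finite R U → Indecomp R U →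
    MemOmegaCM R U → ∃ V ∈ L, Nonempty ((U : Type) ≃ₗ[R] (V : Type))

/-- There are only finitely many isomorphism classes of indecomposable direct summands of
first syzygies of Cohen-Macaulay `R`-modules. -/
def FiniteSyzygySummandType : Prop :=
  ∃ L : List (ModuleCat.{0} R), ∀ U : ModuleCat.{0} R, Module.Finite R U → Indecomp R U →
    (∃ S : ModuleCat.{0} R, MemOmegaCM R S ∧ IsSummandOf R (U : Type) S) →
    ∃ V ∈ L, Nonempty ((U : Type) ≃ₗ[R] (V : Type))

end Syzygies

section Grothendieck

variable (R : Type) [CommRing R]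

/-- The Cohen-Macaulay `R`-modules, as objects of `ModuleCat R`. -/
def CMMod := {M : ModuleCat.{0} R // IsMCM R M}

/-- The relations `[X] + [Z] - [Y]` with `Y ≅ X ⊕ Z`, defining `G(CM(R))` as a quotient
of the free abelian group on the Cohen-Macaulay modules. -/
def GRel : AddSubgroup (FreeAbelianGroup (CMMod R)) :=
  AddSubgroup.closure {a | ∃ X Z Y : CMMod R,
    Nonempty ((Y.1 : Type) ≃ₗ[R] ((X.1 : Type) × (Z.1 : Type))) ∧
    a = FreeAbelianGroup.of X + FreeAbelianGroup.of Z - FreeAbelianGroup.of Y}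

/-- The group `G(CM(R))`: the free abelian group on the isomorphism classes of
Cohen-Macaulay `R`-modules (realized as the free abelian group on all Cohen-Macaulay
modules modulo the direct sum relations). -/
abbrev GCM := FreeAbelianGroup (CMMod R) ⧸ GRel R

/-- The class of an element of the free abelian group in `G(CM(R))`. -/
def gcls : FreeAbelianGroup (CMMod R) →+ GCM R := QuotientAddGroup.mk' _

/-- The subgroup `Ex(CM(R))` of `G(CM(R))` generated by `[X]+[Z]-[Y]` coming from short
exact sequences `0 → Z → Y → X → 0` of Cohen-Macaulay modules. -/
def ExCM : AddSubgroup (GCM R) :=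
  AddSubgroup.closure {x | ∃ (X Z Y : CMMod R) (f : (Z.1 : Type) →ₗ[R] (Y.1 : Type))
    (g : (Y.1 : Type) →ₗ[R] (X.1 : Type)), Function.Injective f ∧ Function.Surjective g ∧
    Function.Exact f g ∧
    x = gcls R (FreeAbelianGroup.of X + FreeAbelianGroup.of Z - FreeAbelianGroup.of Y)}

/-- The subgroup `AR(CM(R))` of `G(CM(R))` generated by `[X]+[Z]-[Y]` coming from
Auslander-Reiten sequences `0 → Z → Y → X → 0` of Cohen-Macaulay modules. -/
def ARCM : AddSubgroup (GCM R) :=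
  AddSubgroup.closure {x | ∃ (X Z Y : CMMod R) (f : (Z.1 : Type) →ₗ[R] (Y.1 : Type))
    (g : (Y.1 : Type) →ₗ[R] (X.1 : Type)), IsARSequence R f g ∧
    x = gcls R (FreeAbelianGroup.of X + FreeAbelianGroup.of Z - FreeAbelianGroup.of Y)}

/-- The image of a subgroup `H ≤ G(CM(R))` in `G(CM(R)) ⊗_ℤ ℚ`: the `ℚ`-subspace spanned by
the image of `H`. The equality `ratSpan R (ExCM R) = ratSpan R (ARCM R)` expresses
`Ex(CM(R)) ⊗_ℤ ℚ = AR(CM(R)) ⊗_ℤ ℚ` inside `G(CM(R)) ⊗_ℤ ℚ`. -/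
def ratSpan (H : AddSubgroup (GCM R)) : Submodule ℚ (TensorProduct ℤ ℚ (GCM R)) :=
  Submodule.span ℚ {x | ∃ g ∈ H, x = (1 : ℚ) ⊗ₜ[ℤ] g}

end Grothendieck

section Transpose

variable (R : Type) [CommRing R]

/-- The data of a minimal free presentation `R^{n1} --d--> R^{n0} --p--> M → 0`. -/
structure PresData (M : Type) [AddCommGroup M] [Module R M] where
  n1 : ℕ
  n0 : ℕ
  d : (Fin n1 → R) →ₗ[R] (Fin n0 → R)
  p : (Fin n0 → R) →ₗ[R] M
  surj : Function.Surjective p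
  exact : LinearMap.range d = LinearMap.ker p
  min0 : LinearMap.ker p ≤ (⊥ : Ideal R).jacobson • (⊤ : Submodule R (Fin n0 → R))
  min1 : LinearMap.ker d ≤ (⊥ : Ideal R).jacobson • (⊤ : Submodule R (Fin n1 → R))

/-- The (Auslander) transpose determined by a minimal free presentation: the cokernel of
the dual map `(R^{n0})^* → (R^{n1})^*`. -/
abbrev TrOf {M : Type} [AddCommGroup M] [Module R M] (D : PresData R M) : Type :=
  Module.Dual R (Fin D.n1 → R) ⧸ LinearMap.range D.d.dualMap

/-- The data of a minimal free cover `p : R^n → M`. -/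
structure SyzData (M : Type) [AddCommGroup M] [Module R M] where
  n : ℕ
  p : (Fin n → R) →ₗ[R] M
  surj : Function.Surjective p
  min : LinearMap.ker p ≤ (⊥ : Ideal R).jacobson • (⊤ : Submodule R (Fin n → R))

/-- The first syzygy determined by a minimal free cover. -/
abbrev SyzOf {M : Type} [AddCommGroup M] [Module R M] (D : SyzData R M) : Type :=
  LinearMap.ker D.p

/-- The data needed to construct `Ω⁻¹ M = Tr Ω Tr M`. -/
structure CosyzData (M : Type) [AddCommGroup M] [Module R M] where
  P : PresData R M
  S : SyzData R (TrOf R P)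
  Q : PresData R (SyzOf R S)

/-- The cosyzygy `Ω⁻¹ M = Tr Ω Tr M` determined by the data `D`. -/
abbrev CosyzOf {M : Type} [AddCommGroup M] [Module R M] (D : CosyzData R M) : Type :=
  TrOf R D.Q

/-- The map `t : Tr M → Tr M'` represents the transpose `Tr φ` of `φ : M' → M`
(with respect to the chosen minimal presentations). -/
def RepresentsTr {M M' : Type} [AddCommGroup M] [Module R M] [AddCommGroup M'] [Module R M']
    (D : PresData R M) (D' : PresData R M') (φ : M' →ₗ[R] M)
    (t : TrOf R D →ₗ[R] TrOf R D') : Prop :=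
  ∃ (φ0 : (Fin D'.n0 → R) →ₗ[R] (Fin D.n0 → R)) (φ1 : (Fin D'.n1 → R) →ₗ[R] (Fin D.n1 → R)),
    D.p ∘ₗ φ0 = φ ∘ₗ D'.p ∧ D.d ∘ₗ φ1 = φ0 ∘ₗ D'.d ∧
    t ∘ₗ (LinearMap.range D.d.dualMap).mkQ = (LinearMap.range D'.d.dualMap).mkQ ∘ₗ φ1.dualMap

/-- The map `v : Ω Y → Ω Y'` represents the syzygy `Ω ψ` of `ψ : Y → Y'`
(with respect to the chosen minimal covers). -/
def RepresentsOmega {Y Y' : Type} [AddCommGroup Y] [Module R Y] [AddCommGroup Y'] [Module R Y']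
    (D : SyzData R Y) (D' : SyzData R Y') (ψ : Y →ₗ[R] Y')
    (v : SyzOf R D →ₗ[R] SyzOf R D') : Prop :=
  ∃ h : (Fin D.n → R) →ₗ[R] (Fin D'.n → R), D'.p ∘ₗ h = ψ ∘ₗ D.p ∧
    (LinearMap.ker D'.p).subtype ∘ₗ v = h ∘ₗ (LinearMap.ker D.p).subtype

/-- The map `w : Ω⁻¹ X' → Ω⁻¹ X` represents `Ω⁻¹ φ = Tr Ω Tr φ` for `φ : X' → X`. -/
def RepresentsOmegaInv {X X' : Type} [AddCommGroup X] [Module R X] [AddCommGroup X']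
    [Module R X'] (C : CosyzData R X) (C' : CosyzData R X') (φ : X' →ₗ[R] X)
    (w : CosyzOf R C' →ₗ[R] CosyzOf R C) : Prop :=
  ∃ (t : TrOf R C.P →ₗ[R] TrOf R C'.P) (v : SyzOf R C.S →ₗ[R] SyzOf R C'.S),
    RepresentsTr R C.P C'.P φ t ∧ RepresentsOmega R C.S C'.S t v ∧
    RepresentsTr R C'.Q C.Q v w

end Transpose

/-- `M` has injective dimension at most `n` as an `R`-module. -/
def InjDimLE (R : Type) [CommRing R] : ℕ → ModuleCat.{0} R → Prop
  | 0, M => Module.Injective R M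
  | n+1, M => ∃ (I : ModuleCat.{0} R) (f : (M : Type) →ₗ[R] (I : Type)),
      Module.Injective R I ∧ Function.Injective f ∧
      InjDimLE R n (ModuleCat.of R ((I : Type) ⧸ LinearMap.range f))

/-- A Gorenstein local ring: a Noetherian local ring of finite injective dimension as a
module over itself. -/
def IsGorensteinLocal (R : Type) [CommRing R] : Prop :=
  IsNoetherianRing R ∧ IsLocalRing R ∧ ∃ n : ℕ, InjDimLE R n (ModuleCat.of R R)

/-- The length of an `R`-module, expressed as the Krull dimension of its lattice of
submodules. -/
noncomputable def modLength (R M : Type) [CommRing R] [AddCommGroup M] [Module R M] :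
    WithBot ℕ∞ :=
  Order.krullDim (Submodule R M)

section Helpers

open CategoryTheory TensorProduct

/-- A linear map killing the kernel of a surjection descends. -/
lemma exists_descend {R A B C : Type} [CommRing R] [AddCommGroup A] [Module R A]
    [AddCommGroup B] [Module R B] [AddCommGroup C] [Module R C]
    (p : A →ₗ[R] B) (hp : Function.Surjective p) (f : A →ₗ[R] C)
    (h : LinearMap.ker p ≤ LinearMap.ker f) : ∃ u : B →ₗ[R] C, u ∘ₗ p = f := by
  refine ⟨(LinearMap.ker p).liftQ f h ∘ₗ (p.quotKerEquivOfSurjective hp).symm.toLinearMap, ?_⟩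
  ext x
  have : (p.quotKerEquivOfSurjective hp).symm (p x) = Submodule.Quotient.mk x := by
    rw [LinearEquiv.symm_apply_eq]; rfl
  simp [this]

lemma equiv_of_ker_eq {R A B C : Type} [CommRing R] [AddCommGroup A] [Module R A]
    [AddCommGroup B] [Module R B] [AddCommGroup C] [Module R C]
    (α : A →ₗ[R] B) (β : A →ₗ[R] C) (hα : Function.Surjective α) (hβ : Function.Surjective β)
    (hk : LinearMap.ker α = LinearMap.ker β) : Nonempty (B ≃ₗ[R] C) :=
  ⟨(α.quotKerEquivOfSurjective hα).symm ≪≫ₗ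
    Submodule.quotEquivOfEq _ _ hk ≪≫ₗ β.quotKerEquivOfSurjective hβ⟩

lemma exists_codRestrict {R A B C : Type} [CommRing R] [AddCommGroup A] [Module R A]
    [AddCommGroup B] [Module R B] [AddCommGroup C] [Module R C]
    (π : B →ₗ[R] C) (f : A →ₗ[R] B) (h : π ∘ₗ f = 0) :
    ∃ k : A →ₗ[R] LinearMap.ker π, (LinearMap.ker π).subtype ∘ₗ k = f :=
  ⟨f.codRestrict _ (fun x => LinearMap.congr_fun h x), rfl⟩

/-- The surjection `Hom(F1, X) → T ⊗ X` where `T = coker (F0^* → F1^*)`. -/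
noncomputable def qmap {R F0 F1 : Type} [CommRing R] [AddCommGroup F0] [Module R F0]
    [AddCommGroup F1] [Module R F1] [Module.Finite R F1] [Module.Projective R F1]
    (d : F1 →ₗ[R] F0) (X : Type) [AddCommGroup X] [Module R X] :
    (F1 →ₗ[R] X) →ₗ[R] ((Module.Dual R F1 ⧸ LinearMap.range d.dualMap) ⊗[R] X) :=
  (LinearMap.range d.dualMap).mkQ.rTensor X ∘ₗ (dualTensorHomEquiv R F1 X).symm.toLinearMap

section
set_option linter.unusedSectionVars false
variable {R F0 F1 : Type} [CommRing R] [AddCommGroup F0] [Module R F0]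
    [AddCommGroup F1] [Module R F1] [Module.Finite R F1] [Module.Projective R F1]
    [Module.Finite R F0] [Module.Projective R F0]
    (d : F1 →ₗ[R] F0) (X Y : Type) [AddCommGroup X] [Module R X] [AddCommGroup Y] [Module R Y]

lemma qmap_surj : Function.Surjective (qmap d X) := by
  refine (LinearMap.rTensor_surjective X (Submodule.mkQ_surjective _)).comp
    (LinearEquiv.surjective _)

lemma dth_dualMap (z : Module.Dual R F0 ⊗[R] X) :
    dualTensorHom R F1 X (d.dualMap.rTensor X z) = dualTensorHom R F0 X z ∘ₗ d := by
  induction z with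
  | zero => simp
  | tmul a x => ext; simp
  | add a b ha hb => simp only [map_add, ha, hb, LinearMap.add_comp]

lemma dth_lTensor (i : X →ₗ[R] Y) (z : Module.Dual R F1 ⊗[R] X) :
    dualTensorHom R F1 Y (i.lTensor _ z) = i ∘ₗ dualTensorHom R F1 X z := by
  induction z with
  | zero => simp
  | tmul a x => ext; simp
  | add a b ha hb => simp only [map_add, ha, hb, LinearMap.comp_add]

lemma qmap_eq_zero_iff (k : F1 →ₗ[R] X) :
    qmap d X k = 0 ↔ ∃ v : F0 →ₗ[R] X, v ∘ₗ d = k := by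
  have hex := rTensor_exact X (f := d.dualMap) (g := (LinearMap.range d.dualMap).mkQ)
    (LinearMap.exact_map_mkQ_range _) (Submodule.mkQ_surjective _)
  obtain ⟨z, rfl⟩ := (dualTensorHomEquiv R F1 X).surjective k
  have e : qmap d X (dualTensorHomEquiv R F1 X z)
      = (LinearMap.range d.dualMap).mkQ.rTensor X z := by simp [qmap]
  have e1 (z) : dualTensorHomEquiv R F1 X z = dualTensorHom R F1 X z := rfl
  have e0 (z) : dualTensorHomEquiv R F0 X z = dualTensorHom R F0 X z := rfl
  rw [e]
  refine (hex z).trans ?_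
  constructor
  · rintro ⟨w, rfl⟩
    exact ⟨dualTensorHom R F0 X w, by rw [e1, dth_dualMap]⟩
  · rintro ⟨v, hv⟩
    obtain ⟨w, rfl⟩ := (dualTensorHomEquiv R F0 X).surjective v
    refine ⟨w, (dualTensorHomEquiv R F1 X).injective ?_⟩
    rw [← hv, e1, e0, dth_dualMap]

lemma lTensor_qmap (i : X →ₗ[R] Y) (k : F1 →ₗ[R] X) :
    i.lTensor _ (qmap d X k) = qmap d Y (i ∘ₗ k) := by
  obtain ⟨z, rfl⟩ := (dualTensorHomEquiv R F1 X).surjective k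
  have e : (dualTensorHomEquiv R F1 Y).symm (i ∘ₗ dualTensorHomEquiv R F1 X z)
      = i.lTensor _ z := by
    rw [LinearEquiv.symm_apply_eq]
    exact (dth_lTensor X Y i z).symm
  simp only [qmap, LinearMap.comp_apply, LinearEquiv.coe_coe, e, LinearEquiv.symm_apply_apply]
  rw [← LinearMap.comp_apply, ← LinearMap.comp_apply, LinearMap.lTensor_comp_rTensor,
    LinearMap.rTensor_comp_lTensor]

end

lemma linAlg_iso (R : Type) [CommRing R]
    (M N : Type) [AddCommGroup M] [Module R M] [AddCommGroup N] [Module R N]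
    [Module.Finite R N] (D : PresData R M)
    (Q : Type) [AddCommGroup Q] [Module R Q] [Module.Projective R Q]
    (π : Q →ₗ[R] N) (hπ : Function.Surjective π) :
    Nonempty (StHom R M N ≃ₗ[R]
      LinearMap.ker ((LinearMap.ker π).subtype.lTensor (TrOf R D))) := by
  let i := (LinearMap.ker π).subtype
  have hi : π ∘ₗ i = 0 := by ext x; exact x.2
  have iinj : Function.Injective i := Subtype.val_injective
  have hpd : D.p ∘ₗ D.d = 0 := by
    ext x
    have : D.d (Pi.single x 1) ∈ LinearMap.ker D.p := by
      rw [← D.exact]; exact LinearMap.mem_range_self _ _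
    simpa using this
  have desc : ∀ (X : Type) [AddCommGroup X] [Module R X] (f : (Fin D.n0 → R) →ₗ[R] X),
      f ∘ₗ D.d = 0 → ∃ u : M →ₗ[R] X, u ∘ₗ D.p = f := by
    intro X _ _ f hf
    refine exists_descend D.p D.surj f ?_
    rw [← D.exact]
    rintro _ ⟨y, rfl⟩
    exact LinearMap.congr_fun hf y
  have pcan : ∀ {X : Type} [AddCommGroup X] [Module R X] {u v : M →ₗ[R] X},
      u ∘ₗ D.p = v ∘ₗ D.p → u = v := fun h => (LinearMap.cancel_right D.surj).1 h
  have icomp : ∀ {X : Type} [AddCommGroup X] [Module R X] {u v : X →ₗ[R] LinearMap.ker π},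
      i ∘ₗ u = i ∘ₗ v → u = v := fun h => (LinearMap.cancel_left iinj).1 h
  -- stSub = maps factoring through π
  have hst : ∀ h : M →ₗ[R] N, h ∈ stSub R M N ↔ ∃ u : M →ₗ[R] Q, h = π ∘ₗ u := by
    intro h
    constructor
    · intro hh
      refine Submodule.span_induction ?_ ?_ ?_ ?_ hh
      · rintro _ ⟨n, g, c, rfl⟩
        obtain ⟨l, hl⟩ := Module.projective_lifting_property π c hπ
        exact ⟨l ∘ₗ g, by rw [← hl]; rfl⟩
      · exact ⟨0, by simp⟩
      · rintro _ _ _ _ ⟨u, rfl⟩ ⟨v, rfl⟩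
        exact ⟨u + v, by rw [LinearMap.comp_add]⟩
      · rintro a _ _ ⟨u, rfl⟩
        exact ⟨a • u, by rw [LinearMap.comp_smul]⟩
    · rintro ⟨u, rfl⟩
      obtain ⟨n, c, hc⟩ := Module.Finite.exists_fin' R N
      obtain ⟨l, hl⟩ := Module.projective_lifting_property c π hc
      exact Submodule.subset_span ⟨n, l ∘ₗ u, c, by rw [← hl]; rfl⟩
  let S : Submodule R (((Fin D.n0 → R) →ₗ[R] Q) × (M →ₗ[R] N) ×
      ((Fin D.n1 → R) →ₗ[R] LinearMap.ker π)) :=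
    { carrier := {x | π ∘ₗ x.1 = x.2.1 ∘ₗ D.p ∧ i ∘ₗ x.2.2 = x.1 ∘ₗ D.d}
      zero_mem' := by simp
      add_mem' := by
        rintro a b ⟨h1, h2⟩ ⟨h3, h4⟩
        constructor
        · simp only [Prod.fst_add, Prod.snd_add, LinearMap.comp_add, LinearMap.add_comp, h1, h3]
        · simp only [Prod.fst_add, Prod.snd_add, LinearMap.comp_add, LinearMap.add_comp, h2, h4]
      smul_mem' := by
        rintro c a ⟨h1, h2⟩
        constructor
        · simp only [Prod.smul_fst, Prod.smul_snd, LinearMap.comp_smul, LinearMap.smul_comp, h1]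
        · simp only [Prod.smul_fst, Prod.smul_snd, LinearMap.comp_smul, LinearMap.smul_comp, h2] }
  let α : S →ₗ[R] StHom R M N :=
    (stSub R M N).mkQ ∘ₗ LinearMap.fst R _ _ ∘ₗ LinearMap.snd R _ _ ∘ₗ S.subtype
  let β : S →ₗ[R] LinearMap.ker (i.lTensor (TrOf R D)) :=
    LinearMap.codRestrict _
      (qmap D.d _ ∘ₗ LinearMap.snd R _ _ ∘ₗ LinearMap.snd R _ _ ∘ₗ S.subtype) (by
      rintro ⟨⟨g, h, k⟩, h1, h2⟩
      change i.lTensor _ (qmap D.d _ k) = 0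
      rw [lTensor_qmap, qmap_eq_zero_iff]
      exact ⟨g, h2.symm⟩)
  have hα : Function.Surjective α := by
    intro y
    obtain ⟨h, rfl⟩ := Submodule.mkQ_surjective _ y
    obtain ⟨g, hg⟩ := Module.projective_lifting_property π (h ∘ₗ D.p) hπ
    obtain ⟨k, hk⟩ := exists_codRestrict π (g ∘ₗ D.d) (by
      rw [← LinearMap.comp_assoc, hg, LinearMap.comp_assoc, hpd, LinearMap.comp_zero])
    exact ⟨⟨(g, h, k), hg, hk⟩, rfl⟩
  have hβ : Function.Surjective β := by
    rintro ⟨t, ht⟩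
    obtain ⟨k, rfl⟩ := qmap_surj D.d _ t
    have ht' : i.lTensor _ (qmap D.d _ k) = 0 := ht
    rw [lTensor_qmap, qmap_eq_zero_iff] at ht'
    obtain ⟨g, hg⟩ := ht'
    obtain ⟨h, hh⟩ := desc N (π ∘ₗ g) (by
      rw [LinearMap.comp_assoc, hg, ← LinearMap.comp_assoc, hi, LinearMap.zero_comp])
    exact ⟨⟨(g, h, k), hh.symm, hg.symm⟩, rfl⟩
  have hk : LinearMap.ker α = LinearMap.ker β := by
    ext ⟨⟨g, h, k⟩, h1, h2⟩
    have ea : (⟨⟨g, h, k⟩, h1, h2⟩ : S) ∈ LinearMap.ker α ↔ h ∈ stSub R M N :=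
      Submodule.Quotient.mk_eq_zero _
    have eb : (⟨⟨g, h, k⟩, h1, h2⟩ : S) ∈ LinearMap.ker β ↔ qmap D.d _ k = 0 :=
      Subtype.ext_iff
    rw [ea, eb, hst, qmap_eq_zero_iff]
    change π ∘ₗ g = h ∘ₗ D.p at h1
    change i ∘ₗ k = g ∘ₗ D.d at h2
    constructor
    · rintro ⟨u, rfl⟩
      obtain ⟨v, hv⟩ := exists_codRestrict π (g - u ∘ₗ D.p) (by
        rw [LinearMap.comp_sub, h1, LinearMap.comp_assoc, sub_self])
      refine ⟨v, icomp ?_⟩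
      change i ∘ₗ v = _ at hv
      rw [← LinearMap.comp_assoc, hv, h2, LinearMap.sub_comp, LinearMap.comp_assoc, hpd]
      simp
    · rintro ⟨v, rfl⟩
      obtain ⟨u, hu⟩ := desc Q (g - i ∘ₗ v) (by
        rw [LinearMap.sub_comp, ← h2, LinearMap.comp_assoc, sub_self])
      refine ⟨u, pcan ?_⟩
      rw [← h1, LinearMap.comp_assoc, hu, LinearMap.comp_sub, ← LinearMap.comp_assoc, hi]
      simp
  exact equiv_of_ker_eq (R := R) (A := S) (B := StHom R M N) (C := LinearMap.ker (i.lTensor (TrOf R D)))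
    α β hα hβ hk

lemma tor_linAlg {R : Type} [CommRing R] (T : Type) [AddCommGroup T] [Module R T]
    {Q2 Q1 Q0 N : Type} [AddCommGroup Q2] [Module R Q2] [AddCommGroup Q1] [Module R Q1]
    [AddCommGroup Q0] [Module R Q0] [AddCommGroup N] [Module R N]
    (d2 : Q2 →ₗ[R] Q1) (d1 : Q1 →ₗ[R] Q0) (π : Q0 →ₗ[R] N)
    (h21 : Function.Exact d2 d1) (h10 : Function.Exact d1 π) :
    ∃ γ : LinearMap.ker (d1.lTensor T) →ₗ[R]
        LinearMap.ker ((LinearMap.ker π).subtype.lTensor T),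
      Function.Surjective γ ∧
        ∀ x, γ x = 0 ↔ (x : T ⊗[R] Q1) ∈ LinearMap.range (d2.lTensor T) := by
  obtain ⟨e, he⟩ := exists_codRestrict π d1 h10.linearMap_comp_eq_zero
  have hes : Function.Surjective e := by
    rintro ⟨y, hy⟩
    obtain ⟨x, hx⟩ := (h10 y).1 hy
    exact ⟨x, Subtype.ext ((LinearMap.congr_fun he x).trans hx)⟩
  have hee : Function.Exact d2 e := by
    intro x
    rw [← h21 x, ← he]
    exact Subtype.ext_iff
  have hT := lTensor_exact T hee hes
  have hc : ∀ z, (LinearMap.ker π).subtype.lTensor T (e.lTensor T z) = d1.lTensor T z := by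
    intro z
    rw [← LinearMap.comp_apply, ← LinearMap.lTensor_comp, he]
  refine ⟨(e.lTensor T).restrict (fun z hz => (hc z).trans hz), ?_, ?_⟩
  · rintro ⟨t, ht⟩
    obtain ⟨z, rfl⟩ := LinearMap.lTensor_surjective T hes t
    exact ⟨⟨z, (hc z).symm.trans ht⟩, rfl⟩
  · intro x
    exact Subtype.ext_iff.trans (hT x)

lemma tor_iso (R : Type) [CommRing R] (T N : ModuleCat.{0} R) (P : ProjectiveResolution N) :
    Nonempty ((((Tor (ModuleCat.{0} R) 1).obj T).obj N : ModuleCat R) ≃ₗ[R]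
      LinearMap.ker ((LinearMap.ker
        (P.π.f 0).hom).subtype.lTensor T)) := by
  have h10 : Function.Exact (P.complex.d 1 0).hom (P.π.f 0).hom :=
    (ShortComplex.ShortExact.moduleCat_exact_iff_function_exact _).1 P.exact₀
  have h21 : Function.Exact (P.complex.d 2 1).hom (P.complex.d 1 0).hom :=
    (ShortComplex.ShortExact.moduleCat_exact_iff_function_exact _).1
      ((P.complex.exactAt_iff' 2 1 0 (by simp) (by simp)).1 (P.complex_exactAt_succ 0))
  obtain ⟨γ, hγ, hk⟩ := tor_linAlg T _ _ _ h21 h10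
  let F := (MonoidalCategory.tensoringLeft (ModuleCat.{0} R)).obj T
  let C := (F.mapHomologicalComplex (ComplexShape.down ℕ)).obj P.complex
  have e1 : ((Tor (ModuleCat.{0} R) 1).obj T).obj N ≅ (C.sc' 2 1 0).homology :=
    P.isoLeftDerivedObj F 1 ≪≫
      ShortComplex.homologyMapIso (C.isoSc' 2 1 0 (by simp) (by simp))
  have e2 := e1 ≪≫ (C.sc' 2 1 0).moduleCatHomologyIso
  let G : LinearMap.ker (C.sc' 2 1 0).g.hom →ₗ[R] _ := γ
  have hG : Function.Surjective G := hγ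
  have hker : LinearMap.range (C.sc' 2 1 0).moduleCatToCycles = LinearMap.ker G := by
    ext x
    refine Iff.trans ?_ (hk x).symm
    constructor
    · rintro ⟨y, rfl⟩
      exact ⟨y, rfl⟩
    · rintro ⟨y, hy⟩
      exact ⟨y, Subtype.ext hy⟩
  exact ⟨e2.toLinearEquiv ≪≫ₗ Submodule.quotEquivOfEq _ _ hker ≪≫ₗ
    G.quotKerEquivOfSurjective hG⟩

end Helpers

open CategoryTheory in
/-- For finitely generated modules `M`, `N` over a Noetherian local ring
there is an isomorphism `stHom_R(M, N) ≅ Tor₁^R(Tr M, N)` (`Tr M` being the Auslander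
transpose given by any minimal free presentation of `M`). -/
theorem stHom_iso_tor_transpose
    (R : Type) [CommRing R] [IsNoetherianRing R] [IsLocalRing R]
    (M N : Type) [AddCommGroup M] [Module R M] [AddCommGroup N] [Module R N]
    (hM : Module.Finite R M) (hN : Module.Finite R N) (D : PresData R M) :
    Nonempty ((StHom R M N) ≃ₗ[R]
      ((((Tor (ModuleCat.{0} R) 1).obj (ModuleCat.of R (TrOf R D))).obj
        (ModuleCat.of R N) : ModuleCat R) : Type)) := by
  let P := projectiveResolution (ModuleCat.of R N)
  obtain ⟨e⟩ := tor_iso R (ModuleCat.of R (TrOf R D)) (ModuleCat.of R N) P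
  have : Module.Projective R (P.complex.X 0) :=
    (IsProjective.iff_projective _).2 (P.projective 0)
  let π : P.complex.X 0 →ₗ[R] N := (P.π.f 0).hom
  have hs : Function.Surjective π :=
    (ModuleCat.epi_iff_surjective _).1 (inferInstance : Epi (P.π.f 0))
  obtain ⟨e'⟩ := linAlg_iso R M N D (P.complex.X 0) π hs
  exact ⟨e' ≪≫ₗ e.symm⟩

end Paper
end

section
/- Let (R, m, k) be a Cohen–Macaulay local ring with an isolated singularity, let 0 → A → B → C → 0 be an Auslander–Reiten sequence of Cohen–Macaulay R-modules, and let U be a non-free Cohen–Macaulay R-module. Then the induced map stHom_R(U, B) → stHom_R(U, C) is surjective if and only if C is not a direct summand of U. -/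
/-!
Common definitions: Cohen-Macaulay modules, isolated singularities, stable Hom,
syzygies, transposes, Auslander-Reiten sequences, and the Grothendieck-type groups
`G(CM(R))`, `Ex(CM(R))`, `AR(CM(R))` from the paper
"Syzygies of Cohen-Macaulay modules and Grothendieck groups".

Throughout, the maximal ideal of a local ring is realized as the Jacobson radical
`(⊥ : Ideal R).jacobson` (for a local ring these coincide), which lets the definitions
make sense without a `IsLocalRing` instance argument.
-/

namespace Paper

/-- Proposition 2.7(1). Let `(R,m,k)` be a Cohen-Macaulay local ring with
an isolated singularity, `0 → A → B → C → 0` an Auslander-Reiten sequence of Cohen-Macaulay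
modules and `U` a non-free Cohen-Macaulay module. Then the induced map
`stHom(U,B) → stHom(U,C)` is surjective iff `C` is not a direct summand of `U`. -/
theorem stHom_surjective_iff_not_summand
    (R : Type) [CommRing R] [IsNoetherianRing R] [IsLocalRing R]
    (hCM : IsMCM R R) (hsing : IsolatedSingularity R)
    (A B C : Type) [AddCommGroup A] [Module R A] [AddCommGroup B] [Module R B]
    [AddCommGroup C] [Module R C] (hA : IsMCM R A) (hB : IsMCM R B) (hC : IsMCM R C)
    (f : A →ₗ[R] B) (g : B →ₗ[R] C) (hAR : IsARSequence R f g)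
    (U : Type) [AddCommGroup U] [Module R U] (hU : IsMCM R U) (hUf : ¬ Module.Free R U) :
    Function.Surjective (stMapLeft R (M := U) g) ↔ ¬ IsSummandOf R C U := by
  obtain ⟨-, -, -, -, hgs, -, hns, -, -, -, -, hlift⟩ := hAR
  have hst : ∀ q ∈ stSub R U C, ∃ l : U →ₗ[R] B, g ∘ₗ l = q := by
    intro q hq
    have hle : stSub R U C ≤ LinearMap.range ((LinearMap.llcomp R U B C g : (U →ₗ[R] B) →ₗ[R] (U →ₗ[R] C))) := by
      rw [stSub, Submodule.span_le]
      rintro q ⟨n, a, b, rfl⟩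
      obtain ⟨c, hc⟩ := Module.projective_lifting_property g b hgs
      exact ⟨c ∘ₗ a, by rw [← hc]; rfl⟩
    obtain ⟨l, hl⟩ := hle hq
    exact ⟨l, hl⟩
  constructor
  · rintro hsurj ⟨D, ⟨e⟩⟩
    apply hns
    let p : U →ₗ[R] C := LinearMap.fst R C D ∘ₗ e.toLinearMap
    obtain ⟨y, hy⟩ := hsurj (Submodule.Quotient.mk p)
    obtain ⟨h, rfl⟩ := Submodule.Quotient.mk_surjective _ y
    have hy' : (Submodule.Quotient.mk (p := stSub R U C) (g ∘ₗ h)) = Submodule.Quotient.mk p := hy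
    rw [Submodule.Quotient.eq] at hy'
    obtain ⟨l, hl⟩ := hst _ hy'
    refine ⟨(h - l) ∘ₗ e.symm.toLinearMap ∘ₗ LinearMap.inl R C D, ?_⟩
    have hp : g ∘ₗ (h - l) = p := by
      rw [LinearMap.comp_sub, hl]; abel
    rw [← LinearMap.comp_assoc, hp]
    ext x
    simp [p]
  · intro hn y
    obtain ⟨q, rfl⟩ := Submodule.Quotient.mk_surjective _ y
    have hq : ¬ IsSplitEpi R q := by
      rintro ⟨s, hs⟩
      apply hn
      have hs' : ∀ c, q (s c) = c := fun c => LinearMap.congr_fun hs c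
      have hm : ∀ x : U, (LinearMap.id - s ∘ₗ q : U →ₗ[R] U) x ∈ LinearMap.ker q := by
        intro x
        simp [hs']
      refine ⟨ModuleCat.of R (LinearMap.ker q), ⟨LinearEquiv.ofLinearMap
        (LinearMap.prod q ((LinearMap.id - s ∘ₗ q).codRestrict (LinearMap.ker q) hm))
        (LinearMap.coprod s (LinearMap.ker q).subtype) ?_ ?_⟩⟩
      · apply LinearMap.ext
        rintro ⟨c, ⟨k, hk⟩⟩
        have hk' : q k = 0 := hk
        refine Prod.ext ?_ (Subtype.ext ?_)
        · simp [hs', hk']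
        · simp [hs', hk']
      · ext x
        simp
    obtain ⟨l, hl⟩ := hlift (ModuleCat.of R U) q hU.1 hq
    refine ⟨Submodule.Quotient.mk l, ?_⟩
    rw [← hl]
    rfl


end Paper
end

section
/- Let k be a field and R = k[X,Y]/(X,Y)^2. Then every indecomposable non-free finitely generated R-module that is a first syzygy of a finitely generated R-module is isomorphic to R/m ≅ k, where m = (X,Y)/(X,Y)^2 is the maximal ideal of R. In particular, R is of finite ΩCM type. -/
/-!
Common definitions: Cohen-Macaulay modules, isolated singularities, stable Hom,
syzygies, transposes, Auslander-Reiten sequences, and the Grothendieck-type groups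
`G(CM(R))`, `Ex(CM(R))`, `AR(CM(R))` from the paper
"Syzygies of Cohen-Macaulay modules and Grothendieck groups".

Throughout, the maximal ideal of a local ring is realized as the Jacobson radical
`(⊥ : Ideal R).jacobson` (for a local ring these coincide), which lets the definitions
make sense without a `IsLocalRing` instance argument.
-/

namespace Paper

/-- The ring `R = k[X,Y]/(X,Y)²`. -/
noncomputable abbrev SquareZeroRing (k : Type) [Field k] : Type :=
  MvPolynomial (Fin 2) k ⧸
    ((Ideal.span {MvPolynomial.X 0, MvPolynomial.X 1} : Ideal (MvPolynomial (Fin 2) k)) ^ 2)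

/-- The maximal ideal `m = (X,Y)/(X,Y)²` of `k[X,Y]/(X,Y)²`. -/
noncomputable def SquareZeroRing.m (k : Type) [Field k] : Ideal (SquareZeroRing k) :=
  Ideal.map (Ideal.Quotient.mk _)
    (Ideal.span {MvPolynomial.X 0, MvPolynomial.X 1} : Ideal (MvPolynomial (Fin 2) k))

theorem aux_span_maximal (k : Type) [Field k] :
    (Ideal.span {MvPolynomial.X 0, MvPolynomial.X 1} :
      Ideal (MvPolynomial (Fin 2) k)).IsMaximal := by
  have h : (Ideal.span {MvPolynomial.X 0, MvPolynomial.X 1} : Ideal (MvPolynomial (Fin 2) k))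
      = RingHom.ker (MvPolynomial.constantCoeff : MvPolynomial (Fin 2) k →+* k) := by
    apply le_antisymm
    · rw [Ideal.span_le]
      rintro x (rfl | rfl) <;> simp
    · intro p hp
      have hs : ({MvPolynomial.X 0, MvPolynomial.X 1} : Set (MvPolynomial (Fin 2) k))
          = MvPolynomial.X '' Set.univ := by
        ext q
        simp [Fin.exists_fin_two, eq_comm]
      rw [hs, MvPolynomial.mem_ideal_span_X_image]
      intro d hd
      by_contra hcon
      push Not at hcon
      have hd0 : d = 0 := by
        ext i
        exact hcon i (Set.mem_univ i)
      subst hd0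
      rw [MvPolynomial.mem_support_iff] at hd
      exact hd (by simpa [MvPolynomial.constantCoeff_eq] using hp)
  rw [h]
  exact RingHom.ker_isMaximal_of_surjective _
    (fun c => ⟨MvPolynomial.C c, by simp⟩)

theorem aux_m_maximal (k : Type) [Field k] : (SquareZeroRing.m k).IsMaximal := by
  have := aux_span_maximal k
  refine Ideal.IsMaximal.map_of_surjective_of_ker_le Ideal.Quotient.mk_surjective ?_
  rw [Ideal.mk_ker]
  exact Ideal.pow_le_self two_ne_zero

theorem aux_m_sq (k : Type) [Field k] : SquareZeroRing.m k * SquareZeroRing.m k = ⊥ := by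
  rw [SquareZeroRing.m, ← Ideal.map_mul, ← pow_two]
  exact Ideal.map_quotient_self _

theorem aux_main (R : Type) [CommRing R] (m : Ideal R) [hm : m.IsMaximal] (hsq : m * m = ⊥)
    (U M : Type) [AddCommGroup U] [Module R U] [AddCommGroup M] [Module R M]
    (hU : Indecomp R U) (hS : IsSyzygyOf R U M) : Nonempty (U ≃ₗ[R] (R ⧸ m)) := by
  obtain ⟨n, π, -, hker, ⟨e⟩⟩ := hS
  have hj : (⊥ : Ideal R).jacobson ≤ m := sInf_le ⟨bot_le, hm⟩
  have hkill : ∀ a ∈ m, ∀ u : U, a • u = 0 := by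
    intro a ha u
    apply e.injective
    apply Subtype.ext
    rw [map_smul, map_zero]
    have h1 : ((e u : LinearMap.ker π) : Fin n → R) ∈ m • (⊤ : Submodule R (Fin n → R)) :=
      Submodule.smul_mono_left hj (hker (e u).2)
    have h2 : a • ((e u : LinearMap.ker π) : Fin n → R) ∈
        m • (m • (⊤ : Submodule R (Fin n → R))) := Submodule.smul_mem_smul ha h1
    rw [← Submodule.mul_smul, hsq, Submodule.bot_smul] at h2
    simpa using h2
  have ht : Module.IsTorsionBySet R U m := fun u a => hkill a a.2 u
  have hss : IsSemisimpleModule R U := by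
    letI := Ideal.Quotient.field m
    letI := ht.module
    exact ht.isSemisimpleModule_iff.1 inferInstance
  obtain ⟨hne, hdec⟩ := hU
  rw [not_subsingleton_iff_nontrivial] at hne
  obtain ⟨u, hu⟩ := exists_ne (0 : U)
  obtain ⟨Q, hQ⟩ := exists_isCompl (Submodule.span R {u})
  have hQ0 : Q = ⊥ := by
    rcases hdec (ModuleCat.of R (Submodule.span R {u})) (ModuleCat.of R Q)
      ⟨(Submodule.prodEquivOfIsCompl _ _ hQ).symm⟩ with h | h
    · exfalso
      have h' : Subsingleton (Submodule.span R {u}) := h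
      rw [Submodule.subsingleton_iff_eq_bot, Submodule.span_singleton_eq_bot] at h'
      exact hu h'
    · have h' : Subsingleton Q := h
      rwa [Submodule.subsingleton_iff_eq_bot] at h'
  have htop : Submodule.span R {u} = ⊤ := by
    have := hQ.sup_eq_top
    rwa [hQ0, sup_bot_eq] at this
  have hann : m = Ideal.torsionOf R U u := by
    refine hm.eq_of_le ?_ ?_
    · rw [Ideal.ne_top_iff_one, Ideal.mem_torsionOf_iff, one_smul]
      exact hu
    · intro a ha
      rw [Ideal.mem_torsionOf_iff]
      exact hkill a ha u
  exact ⟨((Submodule.quotEquivOfEq _ _ hann).trans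
    ((Ideal.quotTorsionOfEquivSpanSingleton R U u).trans
      (LinearEquiv.ofTop _ htop))).symm⟩

/-- Example. Let `k` be a field and `R = k[X,Y]/(X,Y)²`. Every
indecomposable non-free finitely generated `R`-module which is a first syzygy of a finitely
generated `R`-module is isomorphic to `R/m (≅ k)`; in particular `R` is of finite ΩCM type. -/
theorem squareZeroRing_syzygies_and_finiteOmegaCMType (k : Type) [Field k] :
    (∀ U : ModuleCat.{0} (SquareZeroRing k),
      Module.Finite (SquareZeroRing k) U → Indecomp (SquareZeroRing k) (U : Type) →
      ¬ Module.Free (SquareZeroRing k) U →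
      (∃ M : ModuleCat.{0} (SquareZeroRing k), Module.Finite (SquareZeroRing k) M ∧
        IsSyzygyOf (SquareZeroRing k) (U : Type) (M : Type)) →
      Nonempty ((U : Type) ≃ₗ[SquareZeroRing k] (SquareZeroRing k ⧸ SquareZeroRing.m k))) ∧
    FiniteOmegaCMType (SquareZeroRing k) := by
  have := aux_m_maximal k
  refine ⟨?_, [ModuleCat.of _ (SquareZeroRing k ⧸ SquareZeroRing.m k)], ?_⟩
  · rintro U - hU - ⟨M, -, hS⟩
    exact aux_main _ _ (aux_m_sq k) U M hU hS
  · rintro U - hU ⟨M, -, hS⟩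
    exact ⟨_, List.mem_singleton_self _, aux_main _ _ (aux_m_sq k) U M hU hS⟩

end Paper
end
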